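/- Let q₂* ∈ (0,1) and let 0 < δ < min(q₂*, 1−q₂*). Then G is Cauchy continuous on Ñ₂((1,q₂*), δ): for every Cauchy sequence (bₘ) contained in Ñ₂((1,q₂*), δ), the sequence (G(bₘ)) is a Cauchy sequence in ℝ. Consequently, G restricted to Ñ₂((1,q₂*), δ) admits a unique continuous extension to the closure of Ñ₂((1,q₂*), δ). -/

import Mathlib

open Set MeasureTheory

/-- `Ñ₂(a,δ) = {x ∈ (0,1)² : ‖x − a‖ < δ}` with the Euclidean norm on ℝ². -/
def nbhd2 (a : ℝ × ℝ) (δ : ℝ) : Set (ℝ × ℝ) :=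
  {x : ℝ × ℝ | x.1 ∈ Set.Ioo (0 : ℝ) 1 ∧ x.2 ∈ Set.Ioo (0 : ℝ) 1 ∧
    Real.sqrt ((x.1 - a.1) ^ 2 + (x.2 - a.2) ^ 2) < δ}

open Filter Topology

/-- A left inverse of a continuous strictly increasing map of `ℝ` onto an open interval is
continuous on that interval. -/
lemma continuousAt_leftInverse_of_range_eq_Ioo {φ φinv : ℝ → ℝ} {a b : ℝ} (hφm : StrictMono φ)
    (hφrange : Set.range φ = Set.Ioo a b) (hφinv : ∀ x : ℝ, φinv (φ x) = x) :
    ∀ y ∈ Set.Ioo a b, ContinuousAt φinv y := by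
  intro y hy
  rw [← hφrange] at hy
  obtain ⟨x, rfl⟩ := hy
  have hemb : IsOpenEmbedding φ :=
    ⟨hφm.isEmbedding_of_ordConnected (hφrange ▸ Set.ordConnected_Ioo), hφrange ▸ isOpen_Ioo⟩
  rw [ContinuousAt, ← hemb.map_nhds_eq, tendsto_map'_iff, hφinv]
  exact tendsto_id.congr fun z => (hφinv z).symm

/-- The graph of a measurable function of the second coordinate is a Lebesgue null set. -/
lemma ae_fst_ne_of_measurable {f : ℝ → ℝ} (hf : Measurable f) :
    ∀ᵐ v : ℝ × ℝ, v.1 ≠ f v.2 := by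
  have hs : MeasurableSet {v : ℝ × ℝ | v.1 = f v.2} :=
    measurableSet_eq_fun measurable_fst (hf.comp measurable_snd)
  have h0 : volume {v : ℝ × ℝ | v.1 = f v.2} = 0 := by
    rw [Measure.volume_eq_prod, Measure.prod_apply_symm hs]
    simp [Set.preimage]
  simpa [ae_iff] using h0

/-- The line on which the second coordinate is constant is a Lebesgue null set. -/
lemma ae_snd_ne (c : ℝ) : ∀ᵐ v : ℝ × ℝ, v.2 ≠ c :=
  Measure.quasiMeasurePreserving_snd.ae (Measure.ae_ne volume c)

/-- A measure concentrated on the closed unit square and absolutely continuous with respect to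
Lebesgue measure is concentrated on the open unit square. -/
lemma ae_mem_Ioo_of_absolutelyContinuous {μ : Measure (ℝ × ℝ)} (habs : μ ≪ volume)
    (hsupp : μ ((Set.Icc (0 : ℝ) 1 ×ˢ Set.Icc (0 : ℝ) 1)ᶜ) = 0) :
    ∀ᵐ v ∂μ, v.1 ∈ Set.Ioo (0 : ℝ) 1 ∧ v.2 ∈ Set.Ioo (0 : ℝ) 1 := by
  have hI : ∀ᵐ v ∂μ, v ∈ Set.Icc (0 : ℝ) 1 ×ˢ Set.Icc (0 : ℝ) 1 := hsupp
  filter_upwards [hI, habs.ae_le (ae_snd_ne 0), habs.ae_le (ae_snd_ne 1),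
    habs.ae_le (ae_fst_ne_of_measurable (measurable_const (a := (0 : ℝ)))),
    habs.ae_le (ae_fst_ne_of_measurable (measurable_const (a := (1 : ℝ))))] with v hv h1 h2 h3 h4
  obtain ⟨⟨ha, hb⟩, hc, hd⟩ := hv
  exact ⟨⟨ha.lt_of_ne' h3, hb.lt_of_ne h4⟩, hc.lt_of_ne' h1, hd.lt_of_ne h2⟩

lemma closure_nbhd2_subset {q δ : ℝ} (hδ' : δ < min q (1 - q)) :
    closure (nbhd2 (1, q) δ) ⊆ Set.Ioc (0 : ℝ) 1 ×ˢ Set.Ioo (0 : ℝ) 1 := by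
  obtain ⟨h1, h2⟩ := lt_min_iff.1 hδ'
  have hsub : nbhd2 (1, q) δ ⊆ Set.Icc (1 - δ) 1 ×ˢ Set.Icc (q - δ) (q + δ) := by
    rintro ⟨x, y⟩ ⟨hx, hy, hd⟩
    have hx' : |x - 1| < δ := (Real.abs_le_sqrt (by nlinarith [sq_nonneg (y - q)])).trans_lt hd
    have hy' : |y - q| < δ := (Real.abs_le_sqrt (by nlinarith [sq_nonneg (x - 1)])).trans_lt hd
    rw [abs_lt] at hx' hy'
    exact ⟨⟨by simp; linarith, hx.2.le⟩, by simp; linarith, by simp; linarith⟩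
  refine (closure_minimal hsub (isClosed_Icc.prod isClosed_Icc)).trans ?_
  rintro ⟨x, y⟩ ⟨⟨hx, hx'⟩, hy, hy'⟩
  simp only [] at hx hx' hy hy'
  exact ⟨⟨by simp; linarith, hx'⟩, by simp; linarith, by simp; linarith⟩

/-- The weight `𝟙{v₁ < φ(ψ⁻¹(v₂) − ψ⁻¹(q₂) + φ⁻¹(q₁))}·𝟙{q₂ ≤ v₂}`, with the convention
`φ⁻¹(1) = ∞`. -/
noncomputable def extendedWeight (φ φinv ψinv : ℝ → ℝ) (q v : ℝ × ℝ) : ℝ :=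
  (if q.1 < 1 then (if v.1 < φ (ψinv v.2 - ψinv q.2 + φinv q.1) then (1 : ℝ) else 0) else 1) *
    (if q.2 ≤ v.2 then (1 : ℝ) else 0)

lemma norm_extendedWeight_le_one (φ φinv ψinv : ℝ → ℝ) (q v : ℝ × ℝ) :
    ‖extendedWeight φ φinv ψinv q v‖ ≤ 1 := by
  unfold extendedWeight
  split_ifs <;> simp

lemma measurable_indicator_Ioo {ψinv : ℝ → ℝ}
    (hψinv : ∀ y ∈ Set.Ioo (0 : ℝ) 1, ContinuousAt ψinv y) :
    Measurable ((Set.Ioo (0 : ℝ) 1).indicator ψinv) := by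
  classical
  rw [← Set.piecewise_eq_indicator]
  exact ContinuousOn.measurable_piecewise (fun y hy => (hψinv y hy).continuousWithinAt)
    continuousOn_const measurableSet_Ioo

lemma aestronglyMeasurable_extendedWeight {μ : Measure (ℝ × ℝ)} {φ φinv ψinv : ℝ → ℝ}
    (hφc : Continuous φ) (hψinv : ∀ y ∈ Set.Ioo (0 : ℝ) 1, ContinuousAt ψinv y)
    (hμ : ∀ᵐ v ∂μ, v.2 ∈ Set.Ioo (0 : ℝ) 1) (q : ℝ × ℝ) :
    AEStronglyMeasurable (extendedWeight φ φinv ψinv q) μ := by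
  have hmeas : Measurable fun v : ℝ × ℝ =>
      (if q.1 < 1 then (if v.1 < φ ((Set.Ioo (0 : ℝ) 1).indicator ψinv v.2 - ψinv q.2 + φinv q.1)
        then (1 : ℝ) else 0) else 1) * (if q.2 ≤ v.2 then (1 : ℝ) else 0) := by
    have hψ : Measurable fun v : ℝ × ℝ => (Set.Ioo (0 : ℝ) 1).indicator ψinv v.2 :=
      (measurable_indicator_Ioo hψinv).comp measurable_snd
    have hφ : Measurable fun v : ℝ × ℝ =>
        φ ((Set.Ioo (0 : ℝ) 1).indicator ψinv v.2 - ψinv q.2 + φinv q.1) :=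
      hφc.measurable.comp ((hψ.sub_const _).add_const _)
    refine Measurable.mul (Measurable.ite (MeasurableSet.const _) (Measurable.ite ?_ ?_ ?_) ?_)
      (Measurable.ite ?_ ?_ ?_) <;> try exact measurable_const
    · exact measurableSet_lt measurable_fst hφ
    · exact measurableSet_le measurable_const measurable_snd
  refine hmeas.aestronglyMeasurable.congr ?_
  filter_upwards [hμ] with v hv
  simp [extendedWeight, Set.indicator_of_mem hv]

/-- Away from the two curves where it jumps, the extended weight is continuous in `q`. -/
lemma continuousWithinAt_extendedWeight {φ φinv ψinv : ℝ → ℝ}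
    (hφc : Continuous φ) (hφm : StrictMono φ) (hφrange : Set.range φ = Set.Ioo (0 : ℝ) 1)
    (hφinv : ∀ x : ℝ, φinv (φ x) = x)
    (hψinv : ∀ y ∈ Set.Ioo (0 : ℝ) 1, ContinuousAt ψinv y) {c v : ℝ × ℝ}
    (hc : c ∈ Set.Ioc (0 : ℝ) 1 ×ˢ Set.Ioo (0 : ℝ) 1) (hv : v.1 ∈ Set.Ioo (0 : ℝ) 1)
    (hv2 : v.2 ≠ c.2) (hv1 : v.1 ≠ φ (ψinv v.2 - ψinv c.2 + φinv c.1)) :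
    ContinuousWithinAt (fun q => extendedWeight φ φinv ψinv q v)
      (Set.Ioc (0 : ℝ) 1 ×ˢ Set.Ioo (0 : ℝ) 1) c := by
  have hψ2 : ContinuousAt (fun q : ℝ × ℝ => ψinv q.2) c :=
    ContinuousAt.comp (hψinv c.2 hc.2) continuousAt_snd
  have hsnd : ∀ᶠ q : ℝ × ℝ in 𝓝 c, (q.2 ≤ v.2 ↔ c.2 ≤ v.2) := by
    rcases lt_or_gt_of_ne hv2 with h | h
    · filter_upwards [continuousAt_snd.eventually (lt_mem_nhds h)] with q hq
      simp [not_le.2 h, not_le.2 hq]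
    · filter_upwards [continuousAt_snd.eventually (gt_mem_nhds h)] with q hq
      simp [h.le, hq.le]
  have hfst : ∀ᶠ q : ℝ × ℝ in 𝓝[Set.Ioc (0 : ℝ) 1 ×ˢ Set.Ioo (0 : ℝ) 1] c,
      (if q.1 < 1 then (if v.1 < φ (ψinv v.2 - ψinv q.2 + φinv q.1) then (1 : ℝ) else 0) else 1) =
      (if c.1 < 1 then (if v.1 < φ (ψinv v.2 - ψinv c.2 + φinv c.1) then (1 : ℝ) else 0)
        else 1) := by
    by_cases hc1 : c.1 < 1
    · have hφ1 : ContinuousAt (fun q : ℝ × ℝ => φinv q.1) c :=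
        ContinuousAt.comp
          (continuousAt_leftInverse_of_range_eq_Ioo hφm hφrange hφinv c.1 ⟨hc.1.1, hc1⟩)
          continuousAt_fst
      have hcont : ContinuousAt (fun q : ℝ × ℝ => φ (ψinv v.2 - ψinv q.2 + φinv q.1)) c :=
        hφc.continuousAt.comp ((continuousAt_const.sub hψ2).add hφ1)
      have hlt : ∀ᶠ q : ℝ × ℝ in 𝓝 c, q.1 < 1 := continuousAt_fst.eventually (gt_mem_nhds hc1)
      refine Filter.Eventually.filter_mono nhdsWithin_le_nhds ?_
      rcases lt_or_gt_of_ne hv1 with h | h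
      · filter_upwards [hlt, hcont.eventually (lt_mem_nhds h)] with q hq hq'
        simp [hq, hq', hc1, h]
      · filter_upwards [hlt, hcont.eventually (gt_mem_nhds h)] with q hq hq'
        simp [hq, hq'.not_gt, hc1, h.not_gt]
    · rw [← hφrange] at hv
      obtain ⟨t, ht⟩ := hv
      have hM : φ (t - ψinv v.2 + (ψinv c.2 + 1)) < c.1 :=
        lt_of_lt_of_le (hφrange ▸ Set.mem_range_self (f := φ) _ : _ ∈ Set.Ioo (0 : ℝ) 1).2
          (not_lt.1 hc1)
      filter_upwards [self_mem_nhdsWithin,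
        nhdsWithin_le_nhds (continuousAt_fst.eventually (lt_mem_nhds hM)),
        nhdsWithin_le_nhds (hψ2.eventually (gt_mem_nhds (lt_add_one (ψinv c.2))))]
        with q hqS hq1 hq2
      by_cases hq : q.1 < 1
      · obtain ⟨s, hs⟩ : q.1 ∈ Set.range φ := hφrange ▸ ⟨hqS.1.1, hq⟩
        rw [← hs, hφm.lt_iff_lt] at hq1
        have : v.1 < φ (ψinv v.2 - ψinv q.2 + φinv q.1) := by
          rw [← ht, ← hs, hφinv]
          exact hφm (by linarith)
        simp [this, hc1]
      · simp [hq, hc1]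
  refine (continuousWithinAt_const (b := extendedWeight φ φinv ψinv c v)).congr_of_eventuallyEq
    ?_ rfl
  filter_upwards [hfst, nhdsWithin_le_nhds hsnd] with q h1 h2
  simp only [extendedWeight, h1, h2]

/-- The integral against the extended weight is continuous on `(0,1] × (0,1)`. -/
lemma continuousOn_integral_extendedWeight {μ : Measure (ℝ × ℝ)}
    (habs : μ ≪ volume)
    (hsupp : μ ((Set.Icc (0 : ℝ) 1 ×ˢ Set.Icc (0 : ℝ) 1)ᶜ) = 0)
    {m : ℝ × ℝ → ℝ} (hm : Integrable m μ) {φ φinv ψinv : ℝ → ℝ}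
    (hφc : Continuous φ) (hφm : StrictMono φ) (hφrange : Set.range φ = Set.Ioo (0 : ℝ) 1)
    (hφinv : ∀ x : ℝ, φinv (φ x) = x)
    (hψinv : ∀ y ∈ Set.Ioo (0 : ℝ) 1, ContinuousAt ψinv y) :
    ContinuousOn (fun q => ∫ v, m v * extendedWeight φ φinv ψinv q v ∂μ)
      (Set.Ioc (0 : ℝ) 1 ×ˢ Set.Ioo (0 : ℝ) 1) := by
  intro c hc
  have hμ := ae_mem_Ioo_of_absolutelyContinuous habs hsupp
  refine continuousWithinAt_of_dominated (bound := fun v => ‖m v‖) ?_ ?_ hm.norm ?_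
  · exact Eventually.of_forall fun q => hm.aestronglyMeasurable.mul
      (aestronglyMeasurable_extendedWeight hφc hψinv (hμ.mono fun v hv => hv.2) q)
  · refine Eventually.of_forall fun q => Eventually.of_forall fun v => ?_
    rw [norm_mul]
    exact mul_le_of_le_one_right (norm_nonneg _) (norm_extendedWeight_le_one _ _ _ _ _)
  · have hgraph := ae_fst_ne_of_measurable (hφc.measurable.comp
      (((measurable_indicator_Ioo hψinv).sub_const (ψinv c.2)).add_const (φinv c.1)))
    filter_upwards [hμ, habs.ae_le (ae_snd_ne c.2), habs.ae_le hgraph] with v hv h2 h1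
    refine continuousWithinAt_const.mul (continuousWithinAt_extendedWeight hφc hφm hφrange hφinv
      hψinv hc hv.1 h2 ?_)
    simpa [Set.indicator_of_mem hv.2] using h1

/-- With `μ` a probability measure on ℝ² absolutely continuous
w.r.t. Lebesgue measure and supported in `[0,1]²`, `m` μ-integrable, `φ, ψ`
continuous strictly increasing bijections from ℝ onto `(0,1)` with inverses
`φinv, ψinv` on `(0,1)`, and
`G(q₁,q₂) = ∫ m(v)·𝟙{v₁ < φ(ψ⁻¹(v₂) − ψ⁻¹(q₂) + φ⁻¹(q₁))}·𝟙{q₂ ≤ v₂} dμ`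
for `(q₁,q₂) ∈ (0,1)²`: for `q₂* ∈ (0,1)` and `0 < δ < min(q₂*, 1−q₂*)`,
`G` is Cauchy continuous on `Ñ₂((1,q₂*),δ)` and hence admits a unique
continuous extension to the closure of `Ñ₂((1,q₂*),δ)`. -/
theorem stmt3 (μ : Measure (ℝ × ℝ)) [IsProbabilityMeasure μ]
    (habs : μ ≪ volume)
    (hsupp : μ ((Set.Icc (0 : ℝ) 1 ×ˢ Set.Icc (0 : ℝ) 1)ᶜ) = 0)
    (m : ℝ × ℝ → ℝ) (hm : Integrable m μ)
    (φ ψ φinv ψinv : ℝ → ℝ)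
    (hφc : Continuous φ) (hφm : StrictMono φ)
    (hφrange : Set.range φ = Set.Ioo (0 : ℝ) 1)
    (hφinv : ∀ x : ℝ, φinv (φ x) = x)
    (hψc : Continuous ψ) (hψm : StrictMono ψ)
    (hψrange : Set.range ψ = Set.Ioo (0 : ℝ) 1)
    (hψinv : ∀ x : ℝ, ψinv (ψ x) = x)
    (G : ℝ × ℝ → ℝ)
    (hG : ∀ q : ℝ × ℝ, q.1 ∈ Set.Ioo (0 : ℝ) 1 → q.2 ∈ Set.Ioo (0 : ℝ) 1 →
      G q = ∫ v, m v *
        (if v.1 < φ (ψinv v.2 - ψinv q.2 + φinv q.1) then (1 : ℝ) else 0) *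
        (if q.2 ≤ v.2 then (1 : ℝ) else 0) ∂μ)
    (q₂star δ : ℝ) (hq : q₂star ∈ Set.Ioo (0 : ℝ) 1)
    (hδ : 0 < δ) (hδ' : δ < min q₂star (1 - q₂star)) :
    (∀ b : ℕ → ℝ × ℝ, (∀ n, b n ∈ nbhd2 (1, q₂star) δ) → CauchySeq b →
      CauchySeq (fun n => G (b n))) ∧
    (∃ gbar : ℝ × ℝ → ℝ,
      ContinuousOn gbar (closure (nbhd2 (1, q₂star) δ)) ∧
      (∀ x ∈ nbhd2 (1, q₂star) δ, gbar x = G x) ∧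
      ∀ g : ℝ × ℝ → ℝ, ContinuousOn g (closure (nbhd2 (1, q₂star) δ)) →
        (∀ x ∈ nbhd2 (1, q₂star) δ, g x = G x) →
        ∀ x ∈ closure (nbhd2 (1, q₂star) δ), g x = gbar x) := by
  have hψat := continuousAt_leftInverse_of_range_eq_Ioo hψm hψrange hψinv
  set gbar : ℝ × ℝ → ℝ := fun q => ∫ v, m v * extendedWeight φ φinv ψinv q v ∂μ with hgbar
  have hcl := closure_nbhd2_subset hδ'
  have hcont : ContinuousOn gbar (closure (nbhd2 (1, q₂star) δ)) :=
    (continuousOn_integral_extendedWeight habs hsupp hm hφc hφm hφrange hφinv hψat).mono hcl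
  have heq : ∀ x ∈ nbhd2 (1, q₂star) δ, gbar x = G x := by
    rintro x ⟨hx1, hx2, -⟩
    rw [hG x hx1 hx2, hgbar]
    simp only [extendedWeight, if_pos hx1.2, mul_assoc]
  refine ⟨fun b hb hbc => ?_, gbar, hcont, heq, fun g hg hgG => ?_⟩
  · obtain ⟨c, hc⟩ := cauchySeq_tendsto_of_complete hbc
    have hcmem := mem_closure_of_tendsto hc (Eventually.of_forall hb)
    have hlim : Tendsto (fun n => gbar (b n)) atTop (𝓝 (gbar c)) :=
      (hcont c hcmem).tendsto.comp (tendsto_nhdsWithin_iff.2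
        ⟨hc, Eventually.of_forall fun n => subset_closure (hb n)⟩)
    exact (hlim.congr fun n => heq _ (hb n)).cauchySeq
  · exact Set.EqOn.of_subset_closure (fun x hx => (hgG x hx).trans (heq x hx).symm) hg hcont
      subset_closure Subset.rfl
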